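/- Let V be a module over the N=2 Ramond algebra 𝔤 with c₀ = 0, let a, b, c ∈ ℂ, and let (u_i)_{i∈ℤ} be vectors in V such that L_m u_i = (a + bm + i)u_{m+i}, H_m u_i = c·u_{m+i}, and G_m^- u_i = 0 for all m, i ∈ ℤ. Then for all r₁, r₂, s₁, s₂, i ∈ ℤ: G_{r₁}^- G_{r₂}^- G_{s₁}^+ G_{s₂}^+ u_i = (2b+c)(2+c−2b)(s₂−s₁)(r₁−r₂) u_{i+r₁+r₂+s₁+s₂}. -/

import Mathlib

open Submodule

/-- A module over the `N = 2` Ramond algebra `𝔤`: a `ℤ/2`-graded complex vector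
space `V = even ⊕ odd` with parity-preserving operators `L m`, `H m`,
parity-reversing operators `Gp m` (`G_m^+`), `Gm m` (`G_m^-`), and a scalar `c₀`
(the action of the central element `C`), subject to the defining relations. -/
structure RamondRep (V : Type) [AddCommGroup V] [Module ℂ V] : Type where
  L : ℤ → V →ₗ[ℂ] V
  H : ℤ → V →ₗ[ℂ] V
  Gp : ℤ → V →ₗ[ℂ] V
  Gm : ℤ → V →ₗ[ℂ] V
  c₀ : ℂ
  even : Submodule ℂ V
  odd : Submodule ℂ V
  grading : IsCompl even odd
  L_even : ∀ (m : ℤ), ∀ v ∈ even, L m v ∈ even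
  L_odd : ∀ (m : ℤ), ∀ v ∈ odd, L m v ∈ odd
  H_even : ∀ (m : ℤ), ∀ v ∈ even, H m v ∈ even
  H_odd : ∀ (m : ℤ), ∀ v ∈ odd, H m v ∈ odd
  Gp_even : ∀ (m : ℤ), ∀ v ∈ even, Gp m v ∈ odd
  Gp_odd : ∀ (m : ℤ), ∀ v ∈ odd, Gp m v ∈ even
  Gm_even : ∀ (m : ℤ), ∀ v ∈ even, Gm m v ∈ odd
  Gm_odd : ∀ (m : ℤ), ∀ v ∈ odd, Gm m v ∈ even
  rel_LL : ∀ (m n : ℤ) (v : V),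
    L m (L n v) - L n (L m v) =
      ((n : ℂ) - (m : ℂ)) • L (m + n) v +
        ((1 / 12 : ℂ) * ((n : ℂ) ^ 3 - (n : ℂ)) *
          (if m + n = 0 then (1 : ℂ) else 0) * c₀) • v
  rel_HH : ∀ (m n : ℤ) (v : V),
    H m (H n v) - H n (H m v) =
      ((1 / 3 : ℂ) * (m : ℂ) * (if m + n = 0 then (1 : ℂ) else 0) * c₀) • v
  rel_LH : ∀ (m n : ℤ) (v : V),
    L m (H n v) - H n (L m v) = (n : ℂ) • H (m + n) v
  rel_LGp : ∀ (m p : ℤ) (v : V),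
    L m (Gp p v) - Gp p (L m v) = ((p : ℂ) - (m : ℂ) / 2) • Gp (p + m) v
  rel_LGm : ∀ (m p : ℤ) (v : V),
    L m (Gm p v) - Gm p (L m v) = ((p : ℂ) - (m : ℂ) / 2) • Gm (p + m) v
  rel_HGp : ∀ (m p : ℤ) (v : V),
    H m (Gp p v) - Gp p (H m v) = Gp (m + p) v
  rel_HGm : ∀ (m p : ℤ) (v : V),
    H m (Gm p v) - Gm p (H m v) = -(Gm (m + p) v)
  rel_GpGm : ∀ (p q : ℤ) (v : V),
    Gp p (Gm q v) + Gm q (Gp p v) =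
      (-2 : ℂ) • L (p + q) v + ((p : ℂ) - (q : ℂ)) • H (p + q) v +
        ((1 / 3 : ℂ) * ((p : ℂ) ^ 2 - 1 / 4) *
          (if p + q = 0 then (1 : ℂ) else 0) * c₀) • v
  rel_GpGp : ∀ (p q : ℤ) (v : V), Gp p (Gp q v) + Gp q (Gp p v) = 0
  rel_GmGm : ∀ (p q : ℤ) (v : V), Gm p (Gm q v) + Gm q (Gm p v) = 0

namespace RamondRep

variable {V : Type} [AddCommGroup V] [Module ℂ V]

/-- The weight space `V_μ = {v ∈ V : L₀ v = μ v}`. -/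
def wt (ρ : RamondRep V) (μ : ℂ) : Submodule ℂ V :=
  Module.End.eigenspace (ρ.L 0) μ

/-- The parity components, indexed by `ZMod 2`. -/
def parity (ρ : RamondRep V) (τ : ZMod 2) : Submodule ℂ V :=
  if τ = 0 then ρ.even else ρ.odd

/-- `V` is a weight module: it is the sum of its weight spaces. -/
def IsWeight (ρ : RamondRep V) : Prop := (⨆ μ : ℂ, ρ.wt μ) = ⊤

/-- `V` is cuspidal: a weight module with uniformly bounded weight multiplicities
in each parity. -/
def Cuspidal (ρ : RamondRep V) : Prop :=
  ρ.IsWeight ∧ ∃ p : ℕ, ∀ (μ : ℂ) (τ : ZMod 2),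
    Module.rank ℂ ↥(ρ.wt μ ⊓ ρ.parity τ) ≤ (p : Cardinal)

/-- A subspace invariant under all the operators. -/
def IsSubmod (ρ : RamondRep V) (W : Submodule ℂ V) : Prop :=
  (∀ (m : ℤ), ∀ v ∈ W, ρ.L m v ∈ W) ∧ (∀ (m : ℤ), ∀ v ∈ W, ρ.H m v ∈ W) ∧
    (∀ (m : ℤ), ∀ v ∈ W, ρ.Gp m v ∈ W) ∧ (∀ (m : ℤ), ∀ v ∈ W, ρ.Gm m v ∈ W)

/-- A graded subspace invariant under all the operators. -/
def IsGradedSubmod (ρ : RamondRep V) (W : Submodule ℂ V) : Prop :=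
  ρ.IsSubmod W ∧ W = (W ⊓ ρ.even) ⊔ (W ⊓ ρ.odd)

/-- The trivial representation: all operators act by zero. -/
def IsTrivialRep (ρ : RamondRep V) : Prop :=
  ∀ (m : ℤ) (v : V), ρ.L m v = 0 ∧ ρ.H m v = 0 ∧ ρ.Gp m v = 0 ∧ ρ.Gm m v = 0

/-- `V` is simple: nontrivial, and its only graded submodules are `⊥` and `⊤`. -/
def IsSimple (ρ : RamondRep V) : Prop :=
  ¬ ρ.IsTrivialRep ∧
    ∀ W : Submodule ℂ V, ρ.IsGradedSubmod W → W = ⊥ ∨ W = ⊤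

/-- `V` is generated by `v` as a `𝔤`-module. -/
def GeneratedBy (ρ : RamondRep V) (v : V) : Prop :=
  ∀ W : Submodule ℂ V, ρ.IsSubmod W → v ∈ W → W = ⊤

/-- `V` is a highest weight module. -/
def IsHighestWeight (ρ : RamondRep V) : Prop :=
  ∃ v : V, v ≠ 0 ∧ ρ.GeneratedBy v ∧
    (∃ h h' : ℂ, ρ.L 0 v = h • v ∧ ρ.H 0 v = h' • v) ∧
    (∀ m : ℤ, 0 < m → ρ.L m v = 0 ∧ ρ.H m v = 0 ∧ ρ.Gp m v = 0 ∧ ρ.Gm m v = 0) ∧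
    ρ.Gp 0 v = 0

/-- `V` is a lowest weight module. -/
def IsLowestWeight (ρ : RamondRep V) : Prop :=
  ∃ v : V, v ≠ 0 ∧ ρ.GeneratedBy v ∧
    (∃ h h' : ℂ, ρ.L 0 v = h • v ∧ ρ.H 0 v = h' • v) ∧
    (∀ m : ℤ, m < 0 → ρ.L m v = 0 ∧ ρ.H m v = 0 ∧ ρ.Gp m v = 0 ∧ ρ.Gm m v = 0) ∧
    ρ.Gm 0 v = 0

end RamondRep

/-!
The bracket `[{G⁺_p, G⁻_q}, G⁺_s] = 2(p - s) G⁺_{p+q+s}` is free of `L`, `H` and the central charge,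
so it moves `G⁻_{r₂}` past both `G⁺` using only the action of the products `G⁻_q G⁺_p` on the `u_j`.
That action is multiplication by a scalar affine in `p`, `q`, `j`, followed by an index shift.
Applying `G⁻_{r₁}` leaves a polynomial in these scalars, which factors.
-/

namespace RamondRep

variable {V : Type} [AddCommGroup V] [Module ℂ V] (ρ : RamondRep V)

theorem anticommutator_Gp_Gm_commutator_Gp (p q s : ℤ) (v : V) :
    (ρ.Gp p (ρ.Gm q (ρ.Gp s v)) + ρ.Gm q (ρ.Gp p (ρ.Gp s v))) -
        ρ.Gp s (ρ.Gp p (ρ.Gm q v) + ρ.Gm q (ρ.Gp p v)) =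
      (2 * ((p : ℂ) - (s : ℂ))) • ρ.Gp (p + q + s) v := by
  have hL : ρ.L (p + q) (ρ.Gp s v) = ρ.Gp s (ρ.L (p + q) v) +
      ((s : ℂ) - ((p + q : ℤ) : ℂ) / 2) • ρ.Gp (p + q + s) v := by
    rw [add_comm (p + q) s, ← ρ.rel_LGp, add_sub_cancel]
  have hH : ρ.H (p + q) (ρ.Gp s v) = ρ.Gp s (ρ.H (p + q) v) + ρ.Gp (p + q + s) v := by
    rw [← ρ.rel_HGp, add_sub_cancel]
  rw [ρ.rel_GpGm, ρ.rel_GpGm, hL, hH]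
  simp only [map_add, map_smul]
  push_cast
  module

theorem Gm_Gp_Gp_apply_of_Gm_eq_zero {q : ℤ} {v : V} (hv : ρ.Gm q v = 0) (p s : ℤ) :
    ρ.Gm q (ρ.Gp p (ρ.Gp s v)) =
      ρ.Gp s (ρ.Gm q (ρ.Gp p v)) - ρ.Gp p (ρ.Gm q (ρ.Gp s v)) +
        (2 * ((p : ℂ) - (s : ℂ))) • ρ.Gp (p + q + s) v := by
  rw [← ρ.anticommutator_Gp_Gm_commutator_Gp, hv, map_zero, zero_add]
  abel

theorem Gm_Gp_apply_of_c₀_eq_zero (hc : ρ.c₀ = 0) {q : ℤ} {v : V} (hv : ρ.Gm q v = 0) (p : ℤ) :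
    ρ.Gm q (ρ.Gp p v) =
      (-2 : ℂ) • ρ.L (p + q) v + ((p : ℂ) - (q : ℂ)) • ρ.H (p + q) v := by
  simpa only [hv, hc, map_zero, zero_add, mul_zero, zero_smul, add_zero] using ρ.rel_GpGm p q v

theorem Gm_Gm_Gp_Gp_apply {a α β : ℂ} {u : ℤ → V} (hG : ∀ m i : ℤ, ρ.Gm m (u i) = 0)
    (hGG : ∀ p q j : ℤ, ρ.Gm q (ρ.Gp p (u j)) =
      (-2 * (a + (j : ℂ)) + α * (p : ℂ) + β * (q : ℂ)) • u (p + q + j))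
    (r₁ r₂ s₁ s₂ i : ℤ) :
    ρ.Gm r₁ (ρ.Gm r₂ (ρ.Gp s₁ (ρ.Gp s₂ (u i)))) =
      (-β * (2 + α) * ((s₂ : ℂ) - (s₁ : ℂ)) * ((r₁ : ℂ) - (r₂ : ℂ))) •
        u (i + r₁ + r₂ + s₁ + s₂) := by
  have h₁ : s₂ + r₁ + (s₁ + r₂ + i) = i + r₁ + r₂ + s₁ + s₂ := by ring
  have h₂ : s₁ + r₁ + (s₂ + r₂ + i) = i + r₁ + r₂ + s₁ + s₂ := by ring
  have h₃ : s₁ + r₂ + s₂ + r₁ + i = i + r₁ + r₂ + s₁ + s₂ := by ring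
  rw [ρ.Gm_Gp_Gp_apply_of_Gm_eq_zero (hG r₂ i)]
  simp only [hGG, map_add, map_sub, map_smul, h₁, h₂, h₃]
  push_cast
  module

end RamondRep

/-- Lemma 4.2 of the paper. If `(u i)` satisfies
`L_m u_i = (a + bm + i) u_{m+i}`, `H_m u_i = c u_{m+i}`, `G_m^- u_i = 0`, then
`G_{r₁}^- G_{r₂}^- G_{s₁}^+ G_{s₂}^+ u_i
  = (2b+c)(2+c-2b)(s₂-s₁)(r₁-r₂) u_{i+r₁+r₂+s₁+s₂}`. -/
theorem stmt9 {V : Type} [AddCommGroup V] [Module ℂ V] (ρ : RamondRep V)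
    (hc : ρ.c₀ = 0) (a b c : ℂ) (u : ℤ → V)
    (hL : ∀ m i : ℤ, ρ.L m (u i) = (a + b * (m : ℂ) + (i : ℂ)) • u (m + i))
    (hH : ∀ m i : ℤ, ρ.H m (u i) = c • u (m + i))
    (hG : ∀ m i : ℤ, ρ.Gm m (u i) = 0) :
    ∀ r₁ r₂ s₁ s₂ i : ℤ,
      ρ.Gm r₁ (ρ.Gm r₂ (ρ.Gp s₁ (ρ.Gp s₂ (u i)))) =
        ((2 * b + c) * (2 + c - 2 * b) * ((s₂ : ℂ) - (s₁ : ℂ)) *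
          ((r₁ : ℂ) - (r₂ : ℂ))) • u (i + r₁ + r₂ + s₁ + s₂) := by
  intro r₁ r₂ s₁ s₂ i
  have hGG (p q j : ℤ) : ρ.Gm q (ρ.Gp p (u j)) =
      (-2 * (a + (j : ℂ)) + (c - 2 * b) * (p : ℂ) + -(2 * b + c) * (q : ℂ)) • u (p + q + j) := by
    rw [ρ.Gm_Gp_apply_of_c₀_eq_zero hc (hG q j), hL, hH]
    push_cast
    module
  rw [ρ.Gm_Gm_Gp_Gp_apply hG hGG, neg_neg, add_sub_assoc]
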